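/- arXiv:1309.1051 — 2 statements merged into one kernel-verified Lean document; each statement's English description precedes it below -/
import Mathlib

section
/- Let t ≥ 4, let p = ⟨u_1, u_2, …, u_t⟩ be a chordless path in a finite undirected simple graph G, let G' = G − (⋃_{i=2}^{t−1} Adj[u_i] − {u_1, u_t}), and let q = ⟨v_1, v_2, …, v_k⟩ be a shortest path (with respect to the number of edges) in G' with v_1 = u_1 and v_k = u_t. Then the concatenation p ∪ q = ⟨v_1 = u_1, u_2, …, u_t = v_k, v_{k−1}, …, v_2⟩ is a chordless cycle in G of length t + k − 2, and since k ≥ 2 this length is at least t. -/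
variable {V : Type*}

/-- A simple path: a list of pairwise distinct vertices in which
consecutive vertices are adjacent. -/
def IsSimplePathL (G : SimpleGraph V) (p : List V) : Prop :=
  p.Nodup ∧ p.Chain' G.Adj

/-- A chordless path: a simple path with no edge between non-consecutive vertices. -/
def IsChordlessPathL (G : SimpleGraph V) (p : List V) : Prop :=
  IsSimplePathL G p ∧
    ∀ i j : Fin p.length, (i : ℕ) + 1 < (j : ℕ) → ¬ G.Adj (p.get i) (p.get j)

/-- A cycle: a simple path ⟨v₁, …, v_k⟩ (k ≥ 3) together with the edge (v_k, v₁). -/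
def IsCycleL (G : SimpleGraph V) (p : List V) : Prop :=
  IsSimplePathL G p ∧ 3 ≤ p.length ∧
    ∀ hp : p ≠ [], G.Adj (p.getLast hp) (p.head hp)

/-- A chordless cycle: a cycle whose only edges among its vertices are the
consecutive ones and the wrap-around edge. -/
def IsChordlessCycleL (G : SimpleGraph V) (p : List V) : Prop :=
  IsCycleL G p ∧
    ∀ i j : Fin p.length, (i : ℕ) < (j : ℕ) → G.Adj (p.get i) (p.get j) →
      (j : ℕ) = (i : ℕ) + 1 ∨ ((i : ℕ) = 0 ∧ (j : ℕ) = p.length - 1)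

/-- The subgraph induced on a vertex set `S` (all other vertices become isolated). -/
def inducedOn (G : SimpleGraph V) (S : Set V) : SimpleGraph V where
  Adj a b := G.Adj a b ∧ a ∈ S ∧ b ∈ S
  symm := ⟨fun _ _ h => ⟨h.1.symm, h.2.2, h.2.1⟩⟩
  loopless := ⟨fun a h => G.loopless.irrefl a h.1⟩

/-- The vertex set of G' = G − (⋃_{i=2}^{t-1} Adj[u_i] − {u₁, u_t}) for the
path p = ⟨u₁, …, u_t⟩: a vertex is kept iff it is u₁ or u_t, or it lies outside
the closed neighborhood of every interior vertex of p. -/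
def keptSet (G : SimpleGraph V) (p : List V) : Set V :=
  {v | (∃ hp : p ≠ [], v = p.head hp ∨ v = p.getLast hp) ∨
       ∀ i : Fin p.length, 1 ≤ (i : ℕ) → (i : ℕ) + 1 < p.length →
         v ≠ p.get i ∧ ¬ G.Adj (p.get i) v}

/-!
A chord of a shortest path would shorten it, so `q` is chordless, first in `G'` and then in `G`,
since `G'` is an induced subgraph containing every vertex of `q`. As `u₁` and `u_t` are not
adjacent, `q` has interior vertices. By the definition of `G'` these are distinct from and not
adjacent to the interior vertices of `p`; hence `p` without `u₁` and the reverse of `q` without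
`u₁` glue at `u_t` to a chordless path. The only neighbours of `u₁` on this path are its two end
points, so adding `u₁` closes it to a chordless cycle.
-/

section

variable {G : SimpleGraph V}

theorem isSimplePathL_iff {p : List V} :
    IsSimplePathL G p ↔ p.Nodup ∧ p.IsChain G.Adj :=
  Iff.rfl

theorem isChordlessPathL_cons_cons {a b : V} {l : List V} :
    IsChordlessPathL G (a :: b :: l) ↔
      G.Adj a b ∧ a ∉ b :: l ∧ (∀ x ∈ l, ¬ G.Adj a x) ∧ IsChordlessPathL G (b :: l) := by
  constructor
  · rintro ⟨hpath, hchord⟩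
    simp only [isSimplePathL_iff, List.nodup_cons (a := a), List.isChain_cons_cons] at hpath
    obtain ⟨⟨ha, hnodup⟩, hab, hchain⟩ := hpath
    refine ⟨hab, ha, fun x hx ↦ ?_, ⟨hnodup, hchain⟩,
      fun i j hij ↦ hchord i.succ j.succ (by simpa using hij)⟩
    obtain ⟨n, rfl⟩ := List.mem_iff_get.1 hx
    exact hchord 0 n.succ.succ (by simp)
  · rintro ⟨hab, ha, hchord, ⟨hnodup, hchain⟩, hchord'⟩
    refine ⟨⟨List.nodup_cons.2 ⟨ha, hnodup⟩, List.isChain_cons_cons.2 ⟨hab, hchain⟩⟩,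
      fun i j hij ↦ ?_⟩
    induction j using Fin.cases with
    | zero => simp at hij
    | succ j =>
      induction i using Fin.cases with
      | zero =>
        induction j using Fin.cases with
        | zero => simp at hij
        | succ j => exact hchord _ (List.get_mem l j)
      | succ i => exact hchord' i j (by simpa using hij)

theorem IsChordlessPathL.not_adj_endpoints {a b : V} {l : List V}
    (h : IsChordlessPathL G (a :: (l ++ [b]))) (hl : l ≠ []) : ¬ G.Adj a b := by
  obtain ⟨x, m, rfl⟩ := List.exists_cons_of_ne_nil hl
  exact (isChordlessPathL_cons_cons.1 h).2.2.1 b (by simp)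

theorem IsChordlessPathL.tail {a : V} {l : List V} (h : IsChordlessPathL G (a :: l)) :
    IsChordlessPathL G l :=
  ⟨⟨h.1.1.of_cons, List.IsChain.tail h.1.2⟩,
    fun i j hij ↦ h.2 i.succ j.succ (by simpa using hij)⟩

theorem IsChordlessPathL.reverse {p : List V} (h : IsChordlessPathL G p) :
    IsChordlessPathL G p.reverse := by
  obtain ⟨⟨hnodup, hchain⟩, hchord⟩ := h
  refine ⟨⟨List.nodup_reverse.2 hnodup,
    List.isChain_reverse.2 (List.IsChain.imp (fun _ _ hxy ↦ hxy.symm) hchain)⟩,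
    fun i j hij hadj ↦ ?_⟩
  have hj : (j : ℕ) < p.length := by simpa using j.isLt
  simp only [List.get_eq_getElem, List.getElem_reverse] at hadj
  exact hchord ⟨p.length - 1 - j, by lia⟩ ⟨p.length - 1 - i, by lia⟩
    (by simp only; lia) hadj.symm

theorem IsChordlessPathL.append_cons {b : V} {l₁ l₂ : List V}
    (h₁ : IsChordlessPathL G (l₁ ++ [b])) (h₂ : IsChordlessPathL G (b :: l₂))
    (hdisj : l₁.Disjoint l₂) (hnadj : ∀ x ∈ l₁, ∀ y ∈ l₂, ¬ G.Adj x y) :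
    IsChordlessPathL G (l₁ ++ b :: l₂) := by
  induction l₁ with
  | nil => exact h₂
  | cons x l ih =>
    obtain ⟨hxl₂, hll₂⟩ := List.disjoint_cons_left.1 hdisj
    obtain ⟨hnx, hnl⟩ := List.forall_mem_cons.1 hnadj
    have htail := ih h₁.tail hll₂ hnl
    cases l with
    | nil =>
      obtain ⟨hxb, -, -, -⟩ := isChordlessPathL_cons_cons.1 h₁
      exact isChordlessPathL_cons_cons.2 ⟨hxb, by simp [hxb.ne, hxl₂], hnx, htail⟩
    | cons y l =>
      rw [List.cons_append, List.cons_append] at h₁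
      obtain ⟨hxy, hxmem, hxadj, -⟩ := isChordlessPathL_cons_cons.1 h₁
      have hxmem' : x ∉ y :: (l ++ b :: l₂) := by simp_all
      have hxadj' : ∀ z ∈ l ++ b :: l₂, ¬ G.Adj x z := by
        simp only [List.forall_mem_append, List.forall_mem_cons] at hxadj ⊢
        exact ⟨hxadj.1, hxadj.2.1, hnx⟩
      exact isChordlessPathL_cons_cons.2 ⟨hxy, hxmem', hxadj', htail⟩

theorem IsChordlessPathL.isChordlessCycleL_cons {a b c : V} {l : List V}
    (h : IsChordlessPathL G (b :: (l ++ [c]))) (ha : a ∉ b :: (l ++ [c]))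
    (hab : G.Adj a b) (hca : G.Adj c a) (hal : ∀ x ∈ l, ¬ G.Adj a x) :
    IsChordlessCycleL G (a :: b :: (l ++ [c])) := by
  obtain ⟨⟨hnodup, hchain⟩, hchord⟩ := h
  refine ⟨⟨⟨List.nodup_cons.2 ⟨ha, hnodup⟩, List.isChain_cons_cons.2 ⟨hab, hchain⟩⟩,
    by simp, fun _ ↦ by simpa using hca⟩, fun i j hij hadj ↦ ?_⟩
  induction j using Fin.cases with
  | zero => simp at hij
  | succ j =>
    induction i using Fin.cases with
    | zero =>
      induction j using Fin.cases with
      | zero => exact .inl rfl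
      | succ j =>
        refine .inr ⟨rfl, ?_⟩
        by_contra hlast
        have hj : (j : ℕ) < l.length := by
          have := j.isLt
          simp only [List.length_append, List.length_cons, List.length_nil, Fin.val_succ]
            at this hlast
          lia
        refine hal l[j] (List.getElem_mem hj) ?_
        simpa [List.getElem_append_left hj] using hadj
    | succ i =>
      refine .inl (le_antisymm ?_ hij)
      by_contra! hlt
      exact hchord i j (by simpa using hlt) hadj

theorem IsChordlessPathL.isChordlessCycleL_append_reverse {a b : V} {l₁ l₂ : List V}
    (h₁ : IsChordlessPathL G (a :: (l₁ ++ [b]))) (h₂ : IsChordlessPathL G (a :: (l₂ ++ [b])))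
    (hl₁ : l₁ ≠ []) (hl₂ : l₂ ≠ [])
    (hdisj : l₁.Disjoint l₂) (hnadj : ∀ x ∈ l₁, ∀ y ∈ l₂, ¬ G.Adj x y) :
    IsChordlessCycleL G (a :: (l₁ ++ b :: l₂.reverse)) := by
  obtain ⟨x, m₁, rfl⟩ := List.exists_cons_of_ne_nil hl₁
  obtain ⟨y, m₂, rfl⟩ := List.exists_cons_of_ne_nil hl₂
  rw [List.cons_append] at h₁ h₂
  have hopen : IsChordlessPathL G (x :: m₁ ++ b :: (y :: m₂).reverse) :=
    h₁.tail.append_cons (by simpa using h₂.tail.reverse)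
      (fun _ hx hy ↦ hdisj hx (List.mem_reverse.1 hy))
      (fun u hu v hv ↦ hnadj u hu v (List.mem_reverse.1 hv))
  obtain ⟨hax, ha₁, hna₁, -⟩ := isChordlessPathL_cons_cons.1 h₁
  obtain ⟨hay, ha₂, hna₂, -⟩ := isChordlessPathL_cons_cons.1 h₂
  have ha : a ∉ x :: (m₁ ++ b :: m₂.reverse ++ [y]) := by grind
  have hna : ∀ z ∈ m₁ ++ b :: m₂.reverse, ¬ G.Adj a z := by grind
  have hcycle : IsChordlessCycleL G (a :: x :: (m₁ ++ b :: m₂.reverse ++ [y])) :=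
    IsChordlessPathL.isChordlessCycleL_cons (by simpa using hopen) ha hax hay.symm hna
  simpa using hcycle

theorem IsSimplePathL.isChordlessPathL_of_shortest {q : List V}
    (h : IsSimplePathL G q) (hq : q ≠ [])
    (hshort : ∀ r : List V, ∀ hr : r ≠ [], IsSimplePathL G r →
      r.head hr = q.head hq → r.getLast hr = q.getLast hq → q.length ≤ r.length) :
    IsChordlessPathL G q := by
  refine ⟨h, fun i j hij hadj ↦ ?_⟩
  obtain ⟨hnodup, hchain⟩ := isSimplePathL_iff.1 h
  set r := q.take (i + 1) ++ q.drop j with hr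
  have hbridge : ∀ x ∈ (q.take (i + 1)).getLast?, ∀ y ∈ (q.drop j).head?, G.Adj x y := by
    simpa [List.getLast?_take] using hadj
  have hr_path : IsSimplePathL G r := by
    refine ⟨?_, List.isChain_append.2 ⟨hchain.take _, hchain.drop _, hbridge⟩⟩
    have hsub : r.Sublist (q.take j ++ q.drop j) :=
      (List.take_sublist_take_left (by lia)).append_right _
    rw [List.take_append_drop] at hsub
    exact hsub.nodup hnodup
  have hr_head : r.head (by simp [hr, hq]) = q.head hq := by
    simp only [hr]
    rw [List.head_append_of_ne_nil (by simp [hq]), List.head_take]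
  have hr_last : r.getLast (by simp [hr, hq]) = q.getLast hq := by
    simp only [hr]
    rw [List.getLast_append_right (by simp), List.getLast_drop]
  have hle : q.length ≤ r.length := hshort r _ hr_path hr_head hr_last
  simp only [hr, List.length_append, List.length_take, List.length_drop] at hle
  lia

theorem IsSimplePathL.mem_of_inducedOn {S : Set V} {q : List V}
    (h : IsSimplePathL (inducedOn G S) q) (hq : 2 ≤ q.length) {v : V} (hv : v ∈ q) : v ∈ S := by
  have hadj := List.isChain_iff_getElem.1 (isSimplePathL_iff.1 h).2
  obtain ⟨i, hi, rfl⟩ := List.mem_iff_getElem.1 hv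
  cases i with
  | zero => exact (hadj 0 hq).2.1
  | succ i => exact (hadj i hi).2.2

theorem IsChordlessPathL.of_inducedOn {S : Set V} {q : List V}
    (h : IsChordlessPathL (inducedOn G S) q) : IsChordlessPathL G q := by
  refine ⟨⟨h.1.1, List.IsChain.imp (fun _ _ hxy ↦ hxy.1) h.1.2⟩, fun i j hij hadj ↦ ?_⟩
  have hmem : ∀ v ∈ q, v ∈ S := fun v ↦ h.1.mem_of_inducedOn (by lia)
  exact h.2 i j hij ⟨hadj, hmem _ (q.get_mem i), hmem _ (q.get_mem j)⟩

theorem mem_keptSet_cons_append_singleton {a b v : V} {l : List V} :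
    v ∈ keptSet G (a :: (l ++ [b])) ↔
      v = a ∨ v = b ∨ ∀ x ∈ l, v ≠ x ∧ ¬ G.Adj x v := by
  have hint : (∀ i : Fin (a :: (l ++ [b])).length, 1 ≤ (i : ℕ) →
      (i : ℕ) + 1 < (a :: (l ++ [b])).length →
        v ≠ (a :: (l ++ [b])).get i ∧ ¬ G.Adj ((a :: (l ++ [b])).get i) v) ↔
      ∀ x ∈ l, v ≠ x ∧ ¬ G.Adj x v := by
    rw [List.forall_mem_iff_getElem]
    constructor
    · intro h n hn
      simpa [List.getElem_append_left hn] using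
        h ⟨n + 1, by grind⟩ (by simp) (by simpa using hn)
    · rintro h ⟨i, hi⟩ h₁ h₂
      obtain ⟨n, rfl⟩ := Nat.exists_eq_add_of_le' h₁
      have hn : n < l.length := by simpa using h₂
      simpa [List.getElem_append_left hn] using h n hn
  rw [keptSet, Set.mem_ofPred_eq, hint]
  simp [or_assoc]

theorem IsSimplePathL.ne_and_not_adj_of_keptSet {a b x y : V} {l₁ l₂ : List V}
    (h : IsSimplePathL (inducedOn G (keptSet G (a :: (l₁ ++ [b])))) (a :: (l₂ ++ [b])))
    (hx : x ∈ l₁) (hy : y ∈ l₂) : y ≠ x ∧ ¬ G.Adj x y := by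
  have hmem := h.mem_of_inducedOn (by simp) (v := y) (by simp [hy])
  have hnodup : (a :: (l₂ ++ [b])).Nodup := h.1
  rcases mem_keptSet_cons_append_singleton.1 hmem with rfl | rfl | hsep
  · simp [hy] at hnodup
  · exact absurd (List.mem_singleton_self _) (List.disjoint_of_nodup_append hnodup.of_cons hy)
  · exact hsep x hx

end

theorem stmt3_general {V : Type*} (G : SimpleGraph V) (p : List V)
    (ht : 3 ≤ p.length) (hp : IsChordlessPathL G p)
    (q : List V) (hq : q ≠ [])
    (hqpath : IsChordlessPathL (inducedOn G (keptSet G p)) q)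
    (hq1 : q.head hq = p.head (by rintro rfl; simp at ht))
    (hqk : q.getLast hq = p.getLast (by rintro rfl; simp at ht)) :
    IsChordlessCycleL G (p ++ ((q.drop 1).dropLast).reverse) ∧
    (p ++ ((q.drop 1).dropLast).reverse).length = p.length + q.length - 2 ∧
    p.length ≤ (p ++ ((q.drop 1).dropLast).reverse).length := by
  cases p using List.bidirectionalRec with
  | nil => simp at ht
  | singleton a => simp at ht
  | cons_append a l₁ b =>
    have hab : a ≠ b := by rintro rfl; simpa using hp.1.1
    cases q using List.bidirectionalRec with
    | nil => contradiction
    | singleton c => exact absurd (hq1.symm.trans hqk) (by simpa using hab)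
    | cons_append c l₂ d =>
      obtain rfl : c = a := by simpa using hq1
      obtain rfl : d = b := by simpa using hqk
      have hl₁ : l₁ ≠ [] := by rintro rfl; simp at ht
      have hl₂ : l₂ ≠ [] := by
        rintro rfl
        exact hp.not_adj_endpoints hl₁ (isChordlessPathL_cons_cons.1 hqpath).1.1
      have hcycle := hp.isChordlessCycleL_append_reverse hqpath.of_inducedOn hl₁ hl₂
        (fun _ hx hy ↦ (hqpath.1.ne_and_not_adj_of_keptSet hx hy).1 rfl)
        (fun _ hx _ hy ↦ (hqpath.1.ne_and_not_adj_of_keptSet hx hy).2)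
      refine ⟨by simpa using hcycle, ?_, by simp⟩
      simp only [List.drop_succ_cons, List.drop_zero, List.dropLast_concat, List.length_append,
        List.length_cons, List.length_nil, List.length_reverse]
      lia

/-- Let t ≥ 4, let p = ⟨u₁, …, u_t⟩ be a chordless path in a finite
undirected simple graph G, let G' = G − (⋃_{i=2}^{t-1} Adj[u_i] − {u₁, u_t}),
and let q = ⟨v₁, …, v_k⟩ be a shortest path in G' with v₁ = u₁ and v_k = u_t.
Then p ∪ q = ⟨v₁ = u₁, u₂, …, u_t = v_k, v_{k-1}, …, v₂⟩ is a chordless cycle in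
G of length t + k − 2, and (since k ≥ 2) this length is at least t. -/
theorem stmt3 {V : Type*} [Fintype V] (G : SimpleGraph V) (p : List V)
    (ht : 4 ≤ p.length) (hp : IsChordlessPathL G p)
    (q : List V) (hq : q ≠ [])
    (hqpath : IsSimplePathL (inducedOn G (keptSet G p)) q)
    (hq1 : q.head hq = p.head (by intro h; rw [h] at ht; simp at ht))
    (hqk : q.getLast hq = p.getLast (by intro h; rw [h] at ht; simp at ht))
    (hshort : ∀ r : List V, ∀ hr : r ≠ [],
      IsSimplePathL (inducedOn G (keptSet G p)) r →
      r.head hr = p.head (by intro h; rw [h] at ht; simp at ht) →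
      r.getLast hr = p.getLast (by intro h; rw [h] at ht; simp at ht) →
      q.length ≤ r.length) :
    IsChordlessCycleL G (p ++ ((q.drop 1).dropLast).reverse) ∧
    (p ++ ((q.drop 1).dropLast).reverse).length = p.length + q.length - 2 ∧
    p.length ≤ (p ++ ((q.drop 1).dropLast).reverse).length :=
  stmt3_general G p (by lia) hp q hq
    (hqpath.isChordlessPathL_of_shortest hq fun r hr hrpath hr1 hrk ↦
      hshort r hr hrpath (hr1.trans hq1) (hrk.trans hqk)) hq1 hqk
end

section
/- Let p = ⟨v_1, v_2, …, v_k⟩ be a chordless path in a finite undirected simple graph G and let v ∈ Adj(v_k) with v ≠ v_{k−1}. Then exactly one of the following holds: (i) ⟨p, v⟩ = ⟨v_1, v_2, …, v_k, v⟩ is a chordless path; (ii) (v_{k−1}, v) ∈ E; or (iii) there exists i ∈ {1, …, k−2} such that ⟨v_i, v_{i+1}, …, v_k, v⟩ is a chordless cycle. -/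
variable {V : Type*}

/-!
Let `S` be the set of indices `i < k` with `v_i` adjacent to `v`. As `p` is chordless and
`v ≠ v_{k-1}`, the vertex `v` is not on `p`, so `⟨p, v⟩` is a simple path whose chords are exactly
the edges `v_i v` with `i ∈ S`. Each alternative describes the greatest element of `S`: the extended
path is chordless iff `S` is empty; `v` is adjacent to `v_{k-1}` iff `k - 1` is the greatest element
of `S`; and `⟨v_i, …, v_k, v⟩` is a chordless cycle iff `i` is the greatest element of `S`.
-/

section Lists

variable {α : Type*}

lemma forall_get_concat_iff (R : ℕ → ℕ → α → α → Prop) (d : ℕ) (l : List α) (a : α) :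
    (∀ i j : Fin (l ++ [a]).length, (i : ℕ) + d < j →
      R i j ((l ++ [a]).get i) ((l ++ [a]).get j)) ↔
      (∀ i j : Fin l.length, (i : ℕ) + d < j → R i j (l.get i) (l.get j)) ∧
        ∀ i : Fin l.length, (i : ℕ) + d < l.length → R i l.length (l.get i) a := by
  simp only [Fin.forall_iff, List.get_eq_getElem, List.length_append, List.length_singleton]
  constructor
  · refine fun h ↦ ⟨fun i hi j hj hij ↦ ?_, fun i hi hid ↦ ?_⟩
    · simpa only [List.getElem_append_left, hi, hj] using h i (by omega) j (by omega) hij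
    · simpa only [List.getElem_append_left hi, List.getElem_concat_length] using
        h i (by omega) l.length (by omega) hid
  · rintro ⟨hl, ha⟩ i - j hj hij
    have hi : i < l.length := by omega
    obtain hjl | rfl : j < l.length ∨ j = l.length := by omega
    · simpa only [List.getElem_append_left, hi, hjl] using hl i hi j hjl hij
    · simpa only [List.getElem_append_left hi, List.getElem_concat_length] using ha i hi hij

end Lists

lemma isGreatest_preimage_add_zero_iff (S : Set ℕ) (n : ℕ) :
    IsGreatest ((n + ·) ⁻¹' S) 0 ↔ IsGreatest S n := by
  refine and_congr (by simp) ⟨fun h m hm ↦ ?_, fun h m hm ↦ ?_⟩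
  · by_contra! hnm
    have : m - n ≤ 0 := h (by simpa [Nat.add_sub_cancel' hnm.le] using hm)
    omega
  · have : n + m ≤ n := h hm
    omega

section Paths

variable {G : SimpleGraph V} {p : List V} {v : V}

lemma IsSimplePathL.drop (hp : IsSimplePathL G p) (n : ℕ) : IsSimplePathL G (p.drop n) :=
  ⟨hp.1.sublist (List.drop_sublist n p), List.IsChain.drop hp.2 n⟩

lemma IsSimplePathL.concat (hp : IsSimplePathL G p) (hv : v ∉ p)
    (hadj : ∀ u ∈ p.getLast?, G.Adj u v) : IsSimplePathL G (p ++ [v]) :=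
  ⟨hp.1.append (List.nodup_singleton v) (by simpa using hv),
    List.isChain_append.mpr ⟨hp.2, List.isChain_singleton v, by simpa using hadj⟩⟩

lemma IsChordlessPathL.drop (hp : IsChordlessPathL G p) (n : ℕ) :
    IsChordlessPathL G (p.drop n) := by
  refine ⟨hp.1.drop n, fun ⟨i, hi⟩ ⟨j, hj⟩ hij ↦ ?_⟩
  rw [List.length_drop] at hi hj
  simpa only [List.get_eq_getElem, List.getElem_drop] using
    hp.2 ⟨n + i, by omega⟩ ⟨n + j, by omega⟩ (by dsimp only at hij ⊢; omega)

lemma IsChordlessPathL.adj_getElem_iff (hp : IsChordlessPathL G p) {i j : ℕ}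
    (hi : i < p.length) (hj : j < p.length) : G.Adj p[i] p[j] ↔ i + 1 = j ∨ j + 1 = i := by
  constructor
  · intro h
    have hij : ¬ i + 1 < j := fun hlt ↦ hp.2 ⟨i, hi⟩ ⟨j, hj⟩ hlt h
    have hji : ¬ j + 1 < i := fun hlt ↦ hp.2 ⟨j, hj⟩ ⟨i, hi⟩ hlt h.symm
    have hne : i ≠ j := by rintro rfl; exact G.irrefl h
    omega
  · rintro (rfl | rfl)
    · exact List.isChain_iff_getElem.mp hp.1.2 i hj
    · exact (List.isChain_iff_getElem.mp hp.1.2 j hi).symm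

lemma IsChordlessPathL.isSimplePathL_concat (hp : IsChordlessPathL G p) (hk : 1 < p.length)
    (hadj : G.Adj p[p.length - 1] v) (hne : v ≠ p[p.length - 2]) :
    IsSimplePathL G (p ++ [v]) := by
  refine hp.1.concat (fun hv ↦ ?_) fun u hu ↦ ?_
  · obtain ⟨i, hi, rfl⟩ := List.getElem_of_mem hv
    have hnext := (hp.adj_getElem_iff _ hi).mp hadj
    obtain rfl : i = p.length - 2 := by omega
    exact hne rfl
  · obtain ⟨hlt, rfl⟩ := List.getElem?_eq_some_iff.mp (List.getLast?_eq_getElem? ▸ hu)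
    exact hadj

/-- The indices, counted from `0`, of the neighbours of `v` on the path `p`, the last vertex of `p`
being left out. Extending `p` by `v` turns the edges from `v` to these vertices into chords. -/
def priorNeighbors (G : SimpleGraph V) (p : List V) (v : V) : Set ℕ :=
  {i | ∃ h : i + 1 < p.length, G.Adj p[i] v}

lemma bddAbove_priorNeighbors (G : SimpleGraph V) (p : List V) (v : V) :
    BddAbove (priorNeighbors G p v) :=
  ⟨p.length, fun _ hi ↦ (Nat.lt_of_succ_lt hi.1).le⟩

lemma priorNeighbors_drop (G : SimpleGraph V) (p : List V) (v : V) (n : ℕ) :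
    priorNeighbors G (p.drop n) v = (n + ·) ⁻¹' priorNeighbors G p v := by
  ext i
  simp only [priorNeighbors, List.length_drop, List.getElem_drop, Set.mem_preimage,
    Set.mem_ofPred_eq]
  exact exists_prop_congr (fun _ ↦ Iff.rfl) (by omega)

lemma adj_iff_isGreatest_priorNeighbors (hk : 1 < p.length) :
    G.Adj p[p.length - 2] v ↔ IsGreatest (priorNeighbors G p v) (p.length - 2) := by
  refine ⟨fun h ↦ ⟨⟨by omega, h⟩, fun i hi ↦ ?_⟩, fun h ↦ h.1.2⟩
  have := hi.1
  omega

lemma IsChordlessPathL.concat_iff (hp : IsChordlessPathL G p)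
    (hpv : IsSimplePathL G (p ++ [v])) :
    IsChordlessPathL G (p ++ [v]) ↔ priorNeighbors G p v = ∅ := by
  rw [IsChordlessPathL, forall_get_concat_iff (fun _ _ x y ↦ ¬ G.Adj x y),
    Set.eq_empty_iff_forall_notMem]
  refine ⟨fun h i hi ↦ ?_, fun h ↦ ⟨hpv, hp.2, fun i hi hadj ↦ h i ⟨hi, hadj⟩⟩⟩
  obtain ⟨hlt, hadj⟩ := hi
  exact h.2.2 ⟨i, by omega⟩ hlt hadj

lemma isCycleL_concat_iff (hpv : IsSimplePathL G (p ++ [v])) :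
    IsCycleL G (p ++ [v]) ↔ 0 ∈ priorNeighbors G p v := by
  have hclose (hp : p ≠ []) : (∀ h : p ++ [v] ≠ [],
      G.Adj ((p ++ [v]).getLast h) ((p ++ [v]).head h)) ↔
      G.Adj (p[0]'(List.length_pos_of_ne_nil hp)) v := by
    simp [List.head_append_of_ne_nil hp, List.head_eq_getElem, G.adj_comm v]
  simp only [IsCycleL, hpv, true_and, List.length_append, List.length_singleton]
  constructor
  · rintro ⟨hlen, hadj⟩
    have hlt : 0 + 1 < p.length := by omega
    exact ⟨hlt, (hclose (List.ne_nil_of_length_pos (by omega))).mp hadj⟩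
  · rintro ⟨hlt, hadj⟩
    exact ⟨by omega, (hclose (List.ne_nil_of_length_pos (by omega))).mpr hadj⟩

lemma IsChordlessPathL.isChordlessCycleL_concat_iff (hp : IsChordlessPathL G p)
    (hpv : IsSimplePathL G (p ++ [v])) :
    IsChordlessCycleL G (p ++ [v]) ↔ IsGreatest (priorNeighbors G p v) 0 := by
  refine and_congr (isCycleL_concat_iff hpv) ?_
  have hsplit := forall_get_concat_iff (fun i j x y ↦ G.Adj x y →
    j = i + 1 ∨ (i = 0 ∧ j = (p ++ [v]).length - 1)) 0 p v
  simp only [add_zero] at hsplit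
  rw [hsplit]
  constructor
  · rintro ⟨-, hlast⟩ i ⟨hlt, hadj⟩
    have := hlast ⟨i, by omega⟩ (by dsimp only; omega) hadj
    dsimp only at this
    omega
  · refine fun hmax ↦ ⟨fun i j hij hadj ↦ ?_, fun i _ hadj ↦ ?_⟩
    · have := (hp.adj_getElem_iff i.2 j.2).mp hadj
      omega
    · by_cases hlt : (i : ℕ) + 1 < p.length
      · have : (i : ℕ) ≤ 0 := hmax ⟨hlt, hadj⟩
        simp only [List.length_append, List.length_singleton]
        omega
      · omega

lemma IsChordlessPathL.isChordlessCycleL_drop_concat_iff (hp : IsChordlessPathL G p)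
    (hpv : IsSimplePathL G (p ++ [v])) {n : ℕ} (hn : n ≤ p.length) :
    IsChordlessCycleL G (p.drop n ++ [v]) ↔ IsGreatest (priorNeighbors G p v) n := by
  have hdrop : IsSimplePathL G (p.drop n ++ [v]) :=
    List.drop_append_of_le_length hn ▸ hpv.drop n
  rw [(hp.drop n).isChordlessCycleL_concat_iff hdrop, priorNeighbors_drop,
    isGreatest_preimage_add_zero_iff]

end Paths

theorem stmt6_general (G : SimpleGraph V) (p : List V)
    (hk : 1 < p.length) (hp : IsChordlessPathL G p) (v : V)
    (hadj : G.Adj (p.get ⟨p.length - 1, by omega⟩) v)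
    (hne : v ≠ p.get ⟨p.length - 2, by omega⟩) :
    (IsChordlessPathL G (p ++ [v]) ∨
     G.Adj (p.get ⟨p.length - 2, by omega⟩) v ∨
     (∃ j : ℕ, j + 3 ≤ p.length ∧ IsChordlessCycleL G (p.drop j ++ [v]))) ∧
    ¬ (IsChordlessPathL G (p ++ [v]) ∧ G.Adj (p.get ⟨p.length - 2, by omega⟩) v) ∧
    ¬ (IsChordlessPathL G (p ++ [v]) ∧
       ∃ j : ℕ, j + 3 ≤ p.length ∧ IsChordlessCycleL G (p.drop j ++ [v])) ∧
    ¬ (G.Adj (p.get ⟨p.length - 2, by omega⟩) v ∧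
       ∃ j : ℕ, j + 3 ≤ p.length ∧ IsChordlessCycleL G (p.drop j ++ [v])) := by
  simp only [List.get_eq_getElem] at hadj hne ⊢
  have hpv : IsSimplePathL G (p ++ [v]) := hp.isSimplePathL_concat hk hadj hne
  have hcycle : (∃ j, j + 3 ≤ p.length ∧ IsChordlessCycleL G (p.drop j ++ [v])) ↔
      ∃ j, j + 3 ≤ p.length ∧ IsGreatest (priorNeighbors G p v) j :=
    exists_congr fun j ↦ and_congr_right fun hj ↦
      hp.isChordlessCycleL_drop_concat_iff hpv (by omega)
  rw [hp.concat_iff hpv, adj_iff_isGreatest_priorNeighbors hk, hcycle]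
  refine ⟨?_, ?_, ?_, ?_⟩
  · rcases (priorNeighbors G p v).eq_empty_or_nonempty with hempty | hnonempty
    · exact .inl hempty
    obtain ⟨m, hm⟩ := (bddAbove_priorNeighbors G p v).exists_isGreatest_of_nonempty hnonempty
    have hlt : m + 1 < p.length := hm.1.1
    obtain rfl | hm3 : m = p.length - 2 ∨ m + 3 ≤ p.length := by omega
    · exact .inr (.inl hm)
    · exact .inr (.inr ⟨m, hm3, hm⟩)
  · exact fun ⟨hempty, hlast⟩ ↦ hlast.nonempty.ne_empty hempty
  · exact fun ⟨hempty, _, _, hj⟩ ↦ hj.nonempty.ne_empty hempty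
  · rintro ⟨hlast, j, hj3, hj⟩
    have := hj.unique hlast
    omega

/-- Let p = ⟨v₁, …, v_k⟩ be a chordless path and v ∈ Adj(v_k) with
v ≠ v_{k-1}. Then exactly one of the following holds: (i) ⟨v₁, …, v_k, v⟩ is a
chordless path; (ii) (v_{k-1}, v) ∈ E; (iii) there is i ∈ {1, …, k-2} such that
⟨v_i, v_{i+1}, …, v_k, v⟩ is a chordless cycle (i is 1-indexed; below j = i−1). -/
theorem stmt6 {V : Type*} [Fintype V] (G : SimpleGraph V) (p : List V)
    (hk : 2 ≤ p.length) (hp : IsChordlessPathL G p) (v : V)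
    (hadj : G.Adj (p.get ⟨p.length - 1, by omega⟩) v)
    (hne : v ≠ p.get ⟨p.length - 2, by omega⟩) :
    (IsChordlessPathL G (p ++ [v]) ∨
     G.Adj (p.get ⟨p.length - 2, by omega⟩) v ∨
     (∃ j : ℕ, j + 3 ≤ p.length ∧ IsChordlessCycleL G (p.drop j ++ [v]))) ∧
    ¬ (IsChordlessPathL G (p ++ [v]) ∧ G.Adj (p.get ⟨p.length - 2, by omega⟩) v) ∧
    ¬ (IsChordlessPathL G (p ++ [v]) ∧
       ∃ j : ℕ, j + 3 ≤ p.length ∧ IsChordlessCycleL G (p.drop j ++ [v])) ∧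
    ¬ (G.Adj (p.get ⟨p.length - 2, by omega⟩) v ∧
       ∃ j : ℕ, j + 3 ≤ p.length ∧ IsChordlessCycleL G (p.drop j ++ [v])) := by
  exact stmt6_general G p hk hp v hadj hne
end
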